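/- Let R be a commutative ring with nilradical √R and let f(z) = Σ a_n z^n ∈ R((z)) with a_0 a unit and a_n ∈ √R for all n < 0. Then f is invertible in R((z)), and the leading coefficient (the coefficient of z^0) of f^{-1} is a unit modulo nilpotents. -/

import Mathlib

theorem laurentSeries_isUnit_of_unit_coeff_zero {R : Type*} [CommRing R]
    (f : LaurentSeries R) (h0 : IsUnit (f.coeff 0))
    (hneg : ∀ n < (0 : ℤ), f.coeff n ∈ nilradical R) :
    IsUnit f ∧ ∀ g : LaurentSeries R, f * g = 1 →
      IsUnit (Ideal.Quotient.mk (nilradical R) (g.coeff 0)) := by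
  set p : PowerSeries R := PowerSeries.mk fun n => f.coeff n with hp
  set N : LaurentSeries R :=
    ∑ n ∈ Finset.Ico f.order 0, HahnSeries.single n (f.coeff n) with hN
  have hf : f = N + HahnSeries.ofPowerSeries ℤ R p := by
    ext m
    rw [HahnSeries.coeff_add, hN, HahnSeries.coeff_sum, PowerSeries.coeff_coe]
    have hs : ∑ x ∈ Finset.Ico f.order 0, (HahnSeries.single x (f.coeff x)).coeff m
        = if m ∈ Finset.Ico f.order 0 then f.coeff m else 0 := by
      split_ifs with h
      · rw [Finset.sum_eq_single m
          (fun b _ hb => HahnSeries.coeff_single_of_ne hb.symm) (fun h' => absurd h h')]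
        exact HahnSeries.coeff_single_same _ _
      · refine Finset.sum_eq_zero fun b hb => HahnSeries.coeff_single_of_ne ?_
        rintro rfl
        exact h hb
    rw [hs]
    by_cases hm : m < 0
    · by_cases hm' : f.order ≤ m
      · simp [hm, hm']
      · simp [hm, hm', HahnSeries.coeff_eq_zero_of_lt_order (not_le.mp hm')]
    · have : ((m.natAbs : ℕ) : ℤ) = m := by omega
      simp only [Finset.mem_Ico, hm, and_false, if_false, hp, PowerSeries.coeff_mk, zero_add]
      rw [this]
  have hNnil : IsNilpotent N := by
    rw [← mem_nilradical, hN]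
    refine Ideal.sum_mem _ fun n hn => ?_
    obtain ⟨k, hk⟩ := hneg n (Finset.mem_Ico.mp hn).2
    refine ⟨k, ?_⟩
    rw [HahnSeries.single_pow, show f.coeff n ^ k = 0 from hk, HahnSeries.single_eq_zero]
    exact Ideal.zero_mem _
  have hNmul : ∀ (x : LaurentSeries R) (m : ℤ), (N * x).coeff m ∈ nilradical R := by
    intro x m
    rw [hN, Finset.sum_mul, HahnSeries.coeff_sum]
    refine Ideal.sum_mem _ fun n hn => ?_
    have := HahnSeries.coeff_single_mul_add (r := f.coeff n) (x := x) (a := m - n) (b := n)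
    rw [sub_add_cancel] at this
    rw [this]
    exact Ideal.mul_mem_right _ _ (hneg n (Finset.mem_Ico.mp hn).2)
  have hpu : IsUnit p := by
    rw [PowerSeries.isUnit_iff_constantCoeff]
    simpa [hp] using h0
  refine ⟨?_, fun g hg => ?_⟩
  · rw [hf]
    exact hNnil.isUnit_add_right_of_commute (hpu.map _) (Commute.all _ _)
  · obtain ⟨q, hq⟩ := hpu.exists_right_inv
    have hPQ : HahnSeries.ofPowerSeries ℤ R p * HahnSeries.ofPowerSeries ℤ R q = 1 := by
      rw [← map_mul, hq, map_one]
    have hd : HahnSeries.ofPowerSeries ℤ R q - g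
        = N * (g * HahnSeries.ofPowerSeries ℤ R q) := by
      rw [hf] at hg
      linear_combination (HahnSeries.ofPowerSeries ℤ R q) * (-hg) + g * hPQ
    have hc := hNmul (g * HahnSeries.ofPowerSeries ℤ R q) 0
    rw [← hd, HahnSeries.coeff_sub, PowerSeries.coeff_coe] at hc
    rw [← Ideal.Quotient.eq.mpr hc]
    refine IsUnit.map _ ?_
    have := congrArg (PowerSeries.constantCoeff (R := R)) hq
    rw [map_mul, map_one, mul_comm] at this
    simpa using IsUnit.of_mul_eq_one _ this
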